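/- arXiv:1911.10944 — 3 statements merged into one kernel-verified Lean document; each statement's English description precedes it below -/
import Mathlib

section
/- For every w > 0 and every real y with -1 ≤ y < 1, the series ∑_{l=0}^∞ (2l+1)·P_l(y)/(l(l+1)+w) converges. -/
open Filter Topology

/-- The Legendre polynomials `P l` on `ℝ`, i.e. the orthogonal polynomials on `[-1,1]`
normalized by `P l 1 = 1`, defined via the Bonnet recurrence
`P 0 y = 1`, `P 1 y = y`, `(n+2) • P (n+2) y = (2n+3) y P (n+1) y - (n+1) P n y`. -/
noncomputable def legendreP : ℕ → ℝ → ℝ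
  | 0, _ => 1
  | 1, y => y
  | (n + 2), y =>
      ((2 * (n : ℝ) + 3) * y * legendreP (n + 1) y - ((n : ℝ) + 1) * legendreP n y) / ((n : ℝ) + 2)

/-!
By the Christoffel–Darboux identity with second point `1`, the partial sums of `∑ (2l+1) P_l(y)`
are `n (P_{n-1}(y) - P_n(y)) / (1 - y)`, which is `O(n)` because `|P_n| ≤ 1` on `[-1, 1]`. The
weights `1 / (l(l+1)+w)` are `O(l⁻²)` with differences `O(l⁻³)`, so summation by parts turns the
series into an absolutely convergent one. The bound `|P_n| ≤ 1` comes from the quadratic form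
`p² - 2ypq + q²` in consecutive values, which the Chebyshev recurrence conserves and the Legendre
recurrence does not increase.
-/

open Asymptotics Finset

theorem isTheta_natCast_succ : (fun n : ℕ => ((n + 1 : ℕ) : ℝ)) =Θ[atTop] fun n => (n : ℝ) := by
  constructor
  · refine .of_bound 2 ((eventually_ge_atTop 1).mono fun n hn => ?_)
    simp only [RCLike.norm_natCast]
    exact_mod_cast (by lia : n + 1 ≤ 2 * n)
  · refine .of_bound 1 (.of_forall fun n => ?_)
    simp only [RCLike.norm_natCast, one_mul]
    exact_mod_cast n.le_succ

theorem exists_tendsto_sum_range_smul_of_isBigO {𝕜 E : Type*} [NormedField 𝕜]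
    [NormedAddCommGroup E] [NormedSpace 𝕜 E] [CompleteSpace E] {f : ℕ → 𝕜} {z : ℕ → E}
    (hz : (fun n => ∑ i ∈ range n, z i) =O[atTop] fun n => (n : ℝ))
    (hf : f =O[atTop] fun n => ((n : ℝ) ^ 2)⁻¹)
    (hf_sub : (fun n => f (n + 1) - f n) =O[atTop] fun n => ((n : ℝ) ^ 3)⁻¹) :
    ∃ S, Tendsto (fun n => ∑ i ∈ range n, f i • z i) atTop (𝓝 S) := by
  have hz_succ : (fun n => ∑ i ∈ range (n + 1), z i) =O[atTop] fun n => (n : ℝ) :=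
    (hz.comp_tendsto (tendsto_add_atTop_nat 1)).trans isTheta_natCast_succ.1
  have boundary : Tendsto (fun n => f n • ∑ i ∈ range (n + 1), z i) atTop (𝓝 0) := by
    refine ((hf.smul hz_succ).congr_right fun n => ?_).trans_tendsto
      (tendsto_inv_atTop_nhds_zero_nat (𝕜 := ℝ))
    rw [smul_eq_mul]
    field_simp
  have summable_interior :
      Summable fun n => (f (n + 1) - f n) • ∑ i ∈ range (n + 1), z i := by
    refine summable_of_isBigO_nat (Real.summable_nat_pow_inv.2 one_lt_two)
      ((hf_sub.smul hz_succ).congr_right fun n => ?_)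
    rw [smul_eq_mul]
    field_simp
  refine ⟨0 - ∑' n, (f (n + 1) - f n) • ∑ i ∈ range (n + 1), z i,
    (tendsto_add_atTop_iff_nat 1).1 ?_⟩
  refine (boundary.sub summable_interior.hasSum.tendsto_sum_nat).congr fun n => ?_
  exact (sum_range_by_parts f z (n + 1)).symm

theorem legendreP_add_two_sub (y : ℝ) (n : ℕ) :
    legendreP (n + 2) y - y * legendreP (n + 1) y =
      -((n + 1) / (n + 2)) * (legendreP n y - y * legendreP (n + 1) y) := by
  have : (n : ℝ) + 2 ≠ 0 := by positivity
  rw [legendreP]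
  field_simp
  ring

/-- Up to the factor `(n + 1) / (n + 2)`, the recurrence acts as the reflection
`p - y q ↦ -(p - y q)` that preserves the form `p² - 2ypq + q² = (1 - y²) q² + (p - y q)²`. -/
theorem legendreP_sq_sub_add_sq_le (y : ℝ) (n : ℕ) :
    legendreP n y ^ 2 - 2 * y * legendreP n y * legendreP (n + 1) y + legendreP (n + 1) y ^ 2
      ≤ 1 - y ^ 2 := by
  induction n with
  | zero => simp only [legendreP]; linarith
  | succ n ih =>
    set p := legendreP n y
    set q := legendreP (n + 1) y
    have contraction : (legendreP (n + 2) y - y * q) ^ 2 ≤ (p - y * q) ^ 2 := by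
      have ratio_le_one : ((n : ℝ) + 1) / (n + 2) ≤ 1 :=
        div_le_one_of_le₀ (by linarith) (by positivity)
      rw [legendreP_add_two_sub, mul_pow, neg_sq]
      exact mul_le_of_le_one_left (sq_nonneg _) (pow_le_one₀ (by positivity) ratio_le_one)
    linarith

theorem legendreP_eq_pow_of_sq_eq_one {y : ℝ} (hy : y ^ 2 = 1) (n : ℕ) : legendreP n y = y ^ n := by
  induction n using Nat.twoStepInduction with
  | zero => simp [legendreP]
  | one => simp [legendreP]
  | more n ih₀ ih₁ =>
    have : (n : ℝ) + 2 ≠ 0 := by positivity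
    rw [legendreP, ih₀, ih₁, div_eq_iff this]
    linear_combination (n + 1) * y ^ n * hy

theorem abs_legendreP_le_one {y : ℝ} (hy : |y| ≤ 1) (n : ℕ) : |legendreP n y| ≤ 1 := by
  rcases ((sq_le_one_iff_abs_le_one y).2 hy).eq_or_lt with hy_eq | hy_lt
  · rw [legendreP_eq_pow_of_sq_eq_one hy_eq, abs_pow]
    exact pow_le_one₀ (abs_nonneg y) hy
  · have : (1 - y ^ 2) * legendreP n y ^ 2 ≤ (1 - y ^ 2) * 1 := by
      linarith [legendreP_sq_sub_add_sq_le y n, sq_nonneg (legendreP (n + 1) y - y * legendreP n y)]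
    exact (sq_le_one_iff_abs_le_one _).1 (le_of_mul_le_mul_left this (sub_pos.2 hy_lt))

/-- The Christoffel–Darboux identity with second point `1`. -/
theorem one_sub_mul_sum_range_legendreP (y : ℝ) (n : ℕ) :
    (1 - y) * ∑ l ∈ range (n + 1), (2 * (l : ℝ) + 1) * legendreP l y =
      (n + 1) * (legendreP n y - legendreP (n + 1) y) := by
  induction n with
  | zero => simp [legendreP]
  | succ n ih =>
    have : (n : ℝ) + 2 ≠ 0 := by positivity
    rw [sum_range_succ, mul_add, ih, legendreP]
    push_cast
    field_simp
    ring

theorem isBigO_sum_range_legendreP {y : ℝ} (hy₁ : -1 ≤ y) (hy₂ : y < 1) :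
    (fun n => ∑ l ∈ range n, (2 * (l : ℝ) + 1) * legendreP l y) =O[atTop] fun n => (n : ℝ) := by
  have hy : |y| ≤ 1 := abs_le.2 ⟨hy₁, hy₂.le⟩
  have hy_pos : 0 < 1 - y := sub_pos.2 hy₂
  refine .of_bound (2 / (1 - y)) (.of_forall fun n => ?_)
  cases n with
  | zero => simp
  | succ n =>
    rw [Real.norm_eq_abs, RCLike.norm_natCast, div_mul_eq_mul_div, le_div_iff₀' hy_pos]
    calc (1 - y) * |∑ l ∈ range (n + 1), (2 * (l : ℝ) + 1) * legendreP l y|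
      _ = |(n + 1) * (legendreP n y - legendreP (n + 1) y)| := by
          rw [← one_sub_mul_sum_range_legendreP, abs_mul, abs_of_pos hy_pos]
      _ = (n + 1) * |legendreP n y - legendreP (n + 1) y| := by
          rw [abs_mul, abs_of_nonneg (by positivity)]
      _ ≤ (n + 1) * (1 + 1) := by
          gcongr
          exact (abs_sub _ _).trans
            (add_le_add (abs_legendreP_le_one hy n) (abs_legendreP_le_one hy (n + 1)))
      _ = 2 * (n + 1 : ℕ) := by push_cast; ring

section Weights

variable {𝕜 : Type*} [RCLike 𝕜]

theorem isBigO_inv_mul_succ_add (w : 𝕜) :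
    (fun n : ℕ => ((n : 𝕜) * (n + 1) + w)⁻¹) =O[atTop] fun n => ((n : ℝ) ^ 2)⁻¹ := by
  refine .of_bound 1 ?_
  filter_upwards [eventually_ge_atTop 1, eventually_ge_atTop ⌈‖w‖⌉₊] with n one_le norm_le
  have hn : (0 : ℝ) < n := by exact_mod_cast one_le
  have hw : ‖w‖ ≤ n := Nat.ceil_le.1 norm_le
  have sq_le_norm : (n : ℝ) ^ 2 ≤ ‖(n : 𝕜) * (n + 1) + w‖ := by
    calc (n : ℝ) ^ 2 ≤ n * (n + 1) - ‖w‖ := by linarith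
      _ = ‖(n : 𝕜) * (n + 1)‖ - ‖w‖ := by
          exact_mod_cast congrArg (· - ‖w‖) (RCLike.norm_natCast (K := 𝕜) (n * (n + 1))).symm
      _ ≤ ‖(n : 𝕜) * (n + 1) + w‖ := norm_sub_le_norm_add _ _
  rw [one_mul, norm_inv, Real.norm_of_nonneg (by positivity)]
  exact inv_anti₀ (pow_pos hn 2) sq_le_norm

theorem isBigO_inv_mul_succ_add_sub {w : 𝕜} (hw : ∀ l : ℕ, (l : 𝕜) * (l + 1) + w ≠ 0) :
    (fun n : ℕ => (((n + 1 : ℕ) : 𝕜) * ((n + 1 : ℕ) + 1) + w)⁻¹ - ((n : 𝕜) * (n + 1) + w)⁻¹)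
      =O[atTop] fun n => ((n : ℝ) ^ 3)⁻¹ := by
  set b : ℕ → 𝕜 := fun n => ((n : 𝕜) * (n + 1) + w)⁻¹
  have sub_eq (n : ℕ) : -2 * (((n + 1 : ℕ) : 𝕜) * (b (n + 1) * b n)) = b (n + 1) - b n := by
    simp only [b, inv_sub_inv (hw (n + 1)) (hw n), div_eq_mul_inv, mul_inv]
    push_cast
    ring
  have hb : b =O[atTop] fun n => ((n : ℝ) ^ 2)⁻¹ := isBigO_inv_mul_succ_add w
  have hb_succ : (fun n => b (n + 1)) =O[atTop] fun n => ((n : ℝ) ^ 2)⁻¹ :=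
    (hb.comp_tendsto (tendsto_add_atTop_nat 1)).trans (isTheta_natCast_succ.pow 2).inv.1
  have h_succ : (fun n : ℕ => ((n + 1 : ℕ) : 𝕜)) =O[atTop] fun n => (n : ℝ) :=
    .of_norm_left (by simpa only [RCLike.norm_natCast] using isTheta_natCast_succ.1)
  refine ((h_succ.mul (hb_succ.mul hb)).const_mul_left (-2)).congr sub_eq fun n => ?_
  field_simp

end Weights

theorem screened_series_converges_general {𝕜 : Type*} [RCLike 𝕜] (w : 𝕜)
    (hw : ∀ l : ℕ, (l : 𝕜) * (l + 1) + w ≠ 0) (y : ℝ) (hy₁ : -1 ≤ y) (hy₂ : y < 1) :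
    ∃ S : 𝕜, Tendsto (fun N : ℕ => ∑ l ∈ range N,
      (2 * (l : 𝕜) + 1) * (legendreP l y : 𝕜) / ((l : 𝕜) * ((l : 𝕜) + 1) + w)) atTop (𝓝 S) := by
  have isBigO_partial_sums :
      (fun n => ∑ l ∈ range n, (2 * (l : 𝕜) + 1) * (legendreP l y : 𝕜)) =O[atTop]
        fun n => (n : ℝ) := by
    refine .of_norm_left ((isBigO_sum_range_legendreP hy₁ hy₂).norm_left.congr_left fun n => ?_)
    rw [Real.norm_eq_abs, ← RCLike.norm_ofReal (K := 𝕜)]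
    push_cast
    rfl
  simpa only [smul_eq_mul, div_eq_inv_mul] using exists_tendsto_sum_range_smul_of_isBigO
    isBigO_partial_sums (isBigO_inv_mul_succ_add w) (isBigO_inv_mul_succ_add_sub hw)

/-- For every `w > 0` and `-1 ≤ y < 1`, the series `∑ (2l+1) P l y / (l(l+1)+w)`
converges (its partial sums tend to a limit). -/
theorem screened_series_converges (w : ℝ) (hw : 0 < w) (y : ℝ) (hy₁ : -1 ≤ y) (hy₂ : y < 1) :
    ∃ S : ℝ, Tendsto (fun N : ℕ => ∑ l ∈ Finset.range N,
      (2 * (l : ℝ) + 1) * legendreP l y / ((l : ℝ) * ((l : ℝ) + 1) + w)) atTop (𝓝 S) := by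
  simpa using screened_series_converges_general w (fun l => by positivity) y hy₁ hy₂
end

section
/- For every real β, ∫_0^∞ e^{-z/2}·cos(βz)/(1 + e^{-z}) dz = π/(2·cosh(πβ)); equivalently, ∫_0^∞ cos(βz)/(2·cosh(z/2)) dz = π/(2·cosh(πβ)). Consequently, the Green's function of the screened Poisson equation on the sphere at angular separation γ = π (i.e. cos(γ) = -1) equals G = -1/(4·cosh(πβ)). -/
/-!
The substitution `t = sigmoid x` turns the beta integral `B(u, v)` into
`∫ x, exp ((u - v) x / 2) / (2 cosh (x / 2)) ^ (u + v)` over the whole line. On `u + v = 1` the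
power disappears and `B(u, 1 - u) = π / sin (π u)` by the reflection formula, so with
`u = 1 / 2 + w` the two-sided Laplace transform of `1 / (2 cosh (x / 2))` is `π / cos (π w)` in
the strip `|re w| < 1 / 2`. Folding the line onto the half-line and setting `w = β I` gives the
cosine integral for `|im β| < 1 / 2`.
-/

open MeasureTheory Set
open Complex (I betaIntegral)

section RealLineIntegral

variable {E : Type*} [NormedAddCommGroup E] [NormedSpace ℝ E]

lemma integral_eq_integral_Ioi_add_comp_neg {f : ℝ → E} (hf : Integrable f) :
    ∫ x, f x = ∫ x in Ioi 0, (f x + f (-x)) := by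
  rw [integral_add hf.integrableOn hf.comp_neg.integrableOn, integral_comp_neg_Ioi, neg_zero,
    add_comm, intervalIntegral.integral_Iic_add_Ioi hf.integrableOn hf.integrableOn]

lemma hasDerivAt_sigmoid_mul_sigmoid_neg (x : ℝ) :
    HasDerivAt Real.sigmoid (Real.sigmoid x * Real.sigmoid (-x)) x := by
  simpa only [Real.sigmoid_neg] using Real.hasDerivAt_sigmoid x

lemma abs_sigmoid_mul_sigmoid_neg (x : ℝ) :
    |Real.sigmoid x * Real.sigmoid (-x)| = Real.sigmoid x * Real.sigmoid (-x) :=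
  abs_of_pos (mul_pos (Real.sigmoid_pos x) (Real.sigmoid_pos (-x)))

lemma setIntegral_Ioo_zero_one_eq_integral_sigmoid (f : ℝ → E) :
    ∫ t in Ioo 0 1, f t =
      ∫ x, (Real.sigmoid x * Real.sigmoid (-x)) • f (Real.sigmoid x) := by
  have substitution := integral_image_eq_integral_abs_deriv_smul MeasurableSet.univ
    (fun x _ ↦ (hasDerivAt_sigmoid_mul_sigmoid_neg x).hasDerivWithinAt)
    Real.sigmoid_injective.injOn f
  simpa only [image_univ, Real.range_sigmoid, setIntegral_univ, abs_sigmoid_mul_sigmoid_neg]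
    using substitution

lemma integrableOn_Ioo_zero_one_iff_integrable_sigmoid (f : ℝ → E) :
    IntegrableOn f (Ioo 0 1) ↔
      Integrable fun x ↦ (Real.sigmoid x * Real.sigmoid (-x)) • f (Real.sigmoid x) := by
  have substitution := integrableOn_image_iff_integrableOn_abs_deriv_smul MeasurableSet.univ
    (fun x _ ↦ (hasDerivAt_sigmoid_mul_sigmoid_neg x).hasDerivWithinAt)
    Real.sigmoid_injective.injOn f
  simpa only [image_univ, Real.range_sigmoid, integrableOn_univ, abs_sigmoid_mul_sigmoid_neg]
    using substitution

end RealLineIntegral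

section BetaIntegral

lemma sigmoid_eq_exp_half_div_cosh (x : ℝ) :
    Real.sigmoid x = Real.exp (x / 2) / (2 * Real.cosh (x / 2)) := by
  have exp_split : Real.exp (x / 2) * Real.exp (-x) = Real.exp (-(x / 2)) := by
    rw [← Real.exp_add]; ring_nf
  rw [Real.sigmoid_def, Real.cosh_eq, mul_div_cancel₀ _ two_ne_zero, ← exp_split]
  field_simp

lemma ofReal_exp_cpow (x : ℝ) (u : ℂ) : (Real.exp x : ℂ) ^ u = Complex.exp (x * u) := by
  rw [Complex.cpow_def_of_ne_zero (mod_cast (Real.exp_pos x).ne'),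
    ← Complex.ofReal_log (Real.exp_pos x).le, Real.log_exp]

lemma sigmoid_cpow_mul_sigmoid_neg_cpow (u v : ℂ) (x : ℝ) :
    (Real.sigmoid x : ℂ) ^ u * (Real.sigmoid (-x) : ℂ) ^ v =
      Complex.exp ((u - v) * x / 2) / (2 * Real.cosh (x / 2) : ℝ) ^ (u + v) := by
  have cosh_pos : 0 < 2 * Real.cosh (x / 2) := by positivity
  rw [sigmoid_eq_exp_half_div_cosh x, sigmoid_eq_exp_half_div_cosh (-x), neg_div, Real.cosh_neg,
    Complex.ofReal_div, Complex.ofReal_div,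
    Complex.div_cpow_ofReal_nonneg (Real.exp_pos _).le cosh_pos.le,
    Complex.div_cpow_ofReal_nonneg (Real.exp_pos _).le cosh_pos.le,
    ofReal_exp_cpow, ofReal_exp_cpow, div_mul_div_comm, ← Complex.exp_add,
    ← Complex.cpow_add _ _ (mod_cast cosh_pos.ne')]
  congr 2
  push_cast
  ring

lemma sigmoid_mul_sigmoid_neg_smul_beta_integrand (u v : ℂ) (x : ℝ) :
    (Real.sigmoid x * Real.sigmoid (-x)) •
        ((Real.sigmoid x : ℂ) ^ (u - 1) * (1 - (Real.sigmoid x : ℂ)) ^ (v - 1)) =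
      Complex.exp ((u - v) * x / 2) / (2 * Real.cosh (x / 2) : ℝ) ^ (u + v) := by
  have left_ne : (Real.sigmoid x : ℂ) ≠ 0 := mod_cast (Real.sigmoid_pos x).ne'
  have right_ne : (Real.sigmoid (-x) : ℂ) ≠ 0 := mod_cast (Real.sigmoid_pos (-x)).ne'
  have one_sub_sigmoid : 1 - (Real.sigmoid x : ℂ) = Real.sigmoid (-x) := by
    rw [Real.sigmoid_neg, Complex.ofReal_sub, Complex.ofReal_one]
  rw [← sigmoid_cpow_mul_sigmoid_neg_cpow, one_sub_sigmoid, Complex.cpow_sub _ _ left_ne,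
    Complex.cpow_sub _ _ right_ne, Complex.cpow_one, Complex.cpow_one, Complex.real_smul,
    Complex.ofReal_mul]
  field_simp

lemma betaIntegral_eq_integral_cexp_div_cosh_cpow (u v : ℂ) :
    betaIntegral u v =
      ∫ x : ℝ, Complex.exp ((u - v) * x / 2) / (2 * Real.cosh (x / 2) : ℝ) ^ (u + v) := by
  rw [betaIntegral, intervalIntegral.integral_of_le zero_le_one, integral_Ioc_eq_integral_Ioo,
    setIntegral_Ioo_zero_one_eq_integral_sigmoid]
  simp only [sigmoid_mul_sigmoid_neg_smul_beta_integrand]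

lemma integrable_cexp_div_cosh_cpow {u v : ℂ} (hu : 0 < u.re) (hv : 0 < v.re) :
    Integrable fun x : ℝ ↦
      Complex.exp ((u - v) * x / 2) / (2 * Real.cosh (x / 2) : ℝ) ^ (u + v) := by
  have beta_integrable := Complex.betaIntegral_convergent hu hv
  rw [intervalIntegrable_iff_integrableOn_Ioo_of_le zero_le_one,
    integrableOn_Ioo_zero_one_iff_integrable_sigmoid] at beta_integrable
  simpa only [sigmoid_mul_sigmoid_neg_smul_beta_integrand] using beta_integrable

lemma betaIntegral_one_sub {u : ℂ} (hu : 0 < u.re) (hu' : u.re < 1) :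
    betaIntegral u (1 - u) = Real.pi / Complex.sin (Real.pi * u) := by
  rw [Complex.betaIntegral_eq_Gamma_mul_div _ _ hu (by simpa using hu'), add_sub_cancel,
    Complex.Gamma_one, div_one, Complex.Gamma_mul_Gamma_one_sub]

end BetaIntegral

section LaplaceTransform

lemma cexp_div_cosh_cpow_half_add_half_sub (w : ℂ) (x : ℝ) :
    Complex.exp (((1 / 2 + w) - (1 / 2 - w)) * x / 2) /
        (2 * Real.cosh (x / 2) : ℝ) ^ ((1 / 2 + w) + (1 / 2 - w)) =
      Complex.exp (w * x) / (2 * Real.cosh (x / 2) : ℝ) := by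
  rw [show (1 / 2 + w) + (1 / 2 - w) = 1 by ring, Complex.cpow_one]
  ring_nf

variable {w : ℂ}

lemma integrable_cexp_mul_div_cosh (hw : |w.re| < 1 / 2) :
    Integrable fun x : ℝ ↦ Complex.exp (w * x) / (2 * Real.cosh (x / 2) : ℝ) := by
  obtain ⟨lower, upper⟩ := abs_lt.mp hw
  have beta_integrable := integrable_cexp_div_cosh_cpow (u := 1 / 2 + w) (v := 1 / 2 - w)
    (by norm_num; linarith) (by norm_num; linarith)
  simpa only [cexp_div_cosh_cpow_half_add_half_sub] using beta_integrable

lemma integral_cexp_mul_div_cosh (hw : |w.re| < 1 / 2) :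
    ∫ x : ℝ, Complex.exp (w * x) / (2 * Real.cosh (x / 2) : ℝ) =
      Real.pi / Complex.cos (Real.pi * w) := by
  obtain ⟨lower, upper⟩ := abs_lt.mp hw
  calc
    _ = betaIntegral (1 / 2 + w) (1 / 2 - w) := by
      simp only [betaIntegral_eq_integral_cexp_div_cosh_cpow, cexp_div_cosh_cpow_half_add_half_sub]
    _ = betaIntegral (1 / 2 + w) (1 - (1 / 2 + w)) := by ring_nf
    _ = Real.pi / Complex.sin (Real.pi * (1 / 2 + w)) :=
      betaIntegral_one_sub (by norm_num; linarith) (by norm_num; linarith)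
    _ = Real.pi / Complex.cos (Real.pi * w) := by
      rw [← Complex.sin_add_pi_div_two]; ring_nf

lemma integral_Ioi_cosh_mul_div_cosh (hw : |w.re| < 1 / 2) :
    ∫ x in Ioi (0 : ℝ), Complex.cosh (w * x) / (2 * Real.cosh (x / 2) : ℝ) =
      Real.pi / (2 * Complex.cos (Real.pi * w)) := by
  have fold (x : ℝ) : Complex.exp (w * x) / (2 * Real.cosh (x / 2) : ℝ) +
      Complex.exp (w * (-x : ℝ)) / (2 * Real.cosh (-x / 2) : ℝ) =
        2 * (Complex.cosh (w * x) / (2 * Real.cosh (x / 2) : ℝ)) := by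
    rw [neg_div, Real.cosh_neg, Complex.ofReal_neg, mul_neg, ← add_div, ← Complex.two_cosh,
      mul_div_assoc]
  have line_integral := integral_cexp_mul_div_cosh hw
  rw [integral_eq_integral_Ioi_add_comp_neg (integrable_cexp_mul_div_cosh hw)] at line_integral
  simp only [fold, integral_const_mul] at line_integral
  rw [mul_comm 2 (Complex.cos _), ← div_div, ← line_integral,
    mul_div_cancel_left₀ _ two_ne_zero]

lemma integral_Ioi_cos_mul_div_cosh {β : ℂ} (hβ : |β.im| < 1 / 2) :
    ∫ z in Ioi (0 : ℝ), Complex.cos (β * z) / (2 * Real.cosh (z / 2) : ℝ) =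
      Real.pi / (2 * Complex.cosh (Real.pi * β)) := by
  have half_line := integral_Ioi_cosh_mul_div_cosh (w := β * I) (by simpa using hβ)
  simpa only [mul_right_comm β I, ← mul_assoc _ β I, Complex.cosh_mul_I, Complex.cos_mul_I]
    using half_line

end LaplaceTransform

lemma exp_neg_half_div_one_add_exp_neg (z : ℝ) :
    Real.exp (-z / 2) / (1 + Real.exp (-z)) = 1 / (2 * Real.cosh (z / 2)) := by
  rw [div_eq_mul_inv, ← Real.sigmoid_def, sigmoid_eq_exp_half_div_cosh, mul_div_assoc',
    ← Real.exp_add, neg_div, neg_add_cancel, Real.exp_zero]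

lemma sqrt_exp_neg_two_mul_add (z : ℝ) :
    √(Real.exp (-2 * z) + 2 * Real.exp (-z) + 1) = 1 + Real.exp (-z) := by
  have perfect_square :
      Real.exp (-2 * z) + 2 * Real.exp (-z) + 1 = (1 + Real.exp (-z)) ^ 2 := by
    rw [show -2 * z = -z + -z by ring, Real.exp_add]
    ring
  rw [perfect_square, Real.sqrt_sq (by positivity)]

/-- The parameter `β = √(R² / L_d² - 1 / 4)` is imaginary, of modulus below `1 / 2`, when
`R < L_d / 2`. -/
theorem green_at_antipode_general {β : ℂ} (hβ : |β.im| < 1 / 2) :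
    (∫ z in Ioi (0 : ℝ), Real.exp (-z / 2) * Complex.cos (β * z) / (1 + Real.exp (-z) : ℝ)) =
      Real.pi / (2 * Complex.cosh (Real.pi * β)) ∧
    (∫ z in Ioi (0 : ℝ), Complex.cos (β * z) / (2 * Real.cosh (z / 2) : ℝ)) =
      Real.pi / (2 * Complex.cosh (Real.pi * β)) ∧
    (-(1 / (2 * Real.pi)) * ∫ z in Ioi (0 : ℝ), Real.exp (-z / 2) * Complex.cos (β * z) /
        (√(Real.exp (-2 * z) + 2 * Real.exp (-z) + 1) : ℝ)) =
      -(1 / (4 * Complex.cosh (Real.pi * β))) := by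
  have integrand (z : ℝ) :
      Real.exp (-z / 2) * Complex.cos (β * z) / (1 + Real.exp (-z) : ℝ) =
        Complex.cos (β * z) / (2 * Real.cosh (z / 2) : ℝ) := by
    rw [mul_div_right_comm, ← Complex.ofReal_div, exp_neg_half_div_one_add_exp_neg,
      Complex.ofReal_div, Complex.ofReal_one, one_div_mul_eq_div]
  simp only [sqrt_exp_neg_two_mul_add, integrand, integral_Ioi_cos_mul_div_cosh hβ, true_and]
  have pi_ne : (Real.pi : ℂ) ≠ 0 := mod_cast Real.pi_ne_zero
  field_simp
  norm_num

/-- For every real `β`, `∫_0^∞ e^{-z/2} cos(βz)/(1 + e^{-z}) dz = π/(2 cosh(πβ))`;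
equivalently `∫_0^∞ cos(βz)/(2 cosh(z/2)) dz = π/(2 cosh(πβ))`. Consequently the Green's
function of the screened Poisson equation on the sphere at `cos γ = -1` equals
`-1/(4 cosh(πβ))`. -/
theorem green_at_antipode (β : ℝ) :
    (∫ z in Set.Ioi (0 : ℝ), Real.exp (-z / 2) * Real.cos (β * z) / (1 + Real.exp (-z))) =
      Real.pi / (2 * Real.cosh (Real.pi * β)) ∧
    (∫ z in Set.Ioi (0 : ℝ), Real.cos (β * z) / (2 * Real.cosh (z / 2))) =
      Real.pi / (2 * Real.cosh (Real.pi * β)) ∧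
    (-(1 / (2 * Real.pi)) * ∫ z in Set.Ioi (0 : ℝ), Real.exp (-z / 2) * Real.cos (β * z) /
        Real.sqrt (Real.exp (-2 * z) + 2 * Real.exp (-z) + 1)) =
      -(1 / (4 * Real.cosh (Real.pi * β))) := by
  have complex_form := green_at_antipode_general (β := β) (by simp)
  simpa only [integral_complex_ofReal] using mod_cast complex_form
end

section
/- For every real y with -1 ≤ y < 1, the series ∑_{l=1}^∞ (2l+1)·P_l(y)/(l(l+1)) converges and equals -log((e/2)·(1-y)) = -1 - log((1-y)/2). Equivalently, the Green's function of the Poisson equation on the unit sphere, G*(y) = (1/4π)·log((e/2)(1-y)), has the series representation G*(y) = -(1/4π)·∑_{l=1}^∞ (2l+1)P_l(y)/(l(l+1)). -/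
open Filter Topology

/-!
In Laplace's integral `π * Pₗ(t) = ∫₀^π zˡ dφ`, the base `z = t + i √(1 - t²) cos φ` has norm `< 1`
for `|t| < 1` and almost every `φ`. Hence `q N = P N + P (N + 1)`, the mean of `zᴺ (1 + z)`, tends
to `0` on `(-1, 1)`, and `|q N t| ≤ √(2 (1 + t))` because `‖1 + z‖² ≤ 2 (1 + t)`.
Since `(1 - t²) (2l + 1) / (l (l + 1)) * Pₗ' = Pₗ₋₁ - Pₗ₊₁`, the derivative of the `N`-th partial
sum telescopes to `(q 0 - q N) / (1 - t²)`, which converges to `1 / (1 - t)` and is dominated by a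
multiple of `(1 + t) ^ (-1/2)`. So the derivatives can be integrated termwise from `-1`, where
`Pₗ(-1) = (-1)ˡ` makes the partial sums explicit.
-/

open MeasureTheory Set
open scoped Real

lemma legendreP_zero (y : ℝ) : legendreP 0 y = 1 := by
  rw [legendreP]

lemma legendreP_one (y : ℝ) : legendreP 1 y = y := by
  rw [legendreP]

lemma add_two_mul_legendreP_add_two (n : ℕ) (y : ℝ) :
    ((n : ℝ) + 2) * legendreP (n + 2) y =
      (2 * (n : ℝ) + 3) * y * legendreP (n + 1) y - ((n : ℝ) + 1) * legendreP n y := by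
  rw [legendreP, mul_div_cancel₀ _ (by positivity)]

lemma legendreP_neg_one : ∀ n : ℕ, legendreP n (-1) = (-1) ^ n
  | 0 => by simp [legendreP_zero]
  | 1 => by simp [legendreP_one]
  | n + 2 => by
    have bonnet := add_two_mul_legendreP_add_two n (-1)
    rw [legendreP_neg_one n, legendreP_neg_one (n + 1)] at bonnet
    refine mul_left_cancel₀ (show (n : ℝ) + 2 ≠ 0 by positivity) ?_
    linear_combination bonnet

lemma contDiff_legendreP {k : WithTop ℕ∞} : ∀ n : ℕ, ContDiff ℝ k (legendreP n)
  | 0 => by simpa only [funext legendreP_zero] using contDiff_const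
  | 1 => by simpa only [funext legendreP_one] using contDiff_fun_id
  | n + 2 => by
    have h₀ := contDiff_legendreP (k := k) n
    have h₁ := contDiff_legendreP (k := k) (n + 1)
    have bonnet : legendreP (n + 2) = fun y ↦
        ((2 * (n : ℝ) + 3) * y * legendreP (n + 1) y - ((n : ℝ) + 1) * legendreP n y) /
          ((n : ℝ) + 2) := by
      ext y; rw [legendreP]
    rw [bonnet]
    fun_prop

lemma differentiable_legendreP (n : ℕ) : Differentiable ℝ (legendreP n) :=
  (contDiff_legendreP (k := 1) n).differentiable one_ne_zero

lemma add_two_mul_deriv_legendreP_add_two (n : ℕ) (y : ℝ) :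
    ((n : ℝ) + 2) * deriv (legendreP (n + 2)) y =
      (2 * (n : ℝ) + 3) * (legendreP (n + 1) y + y * deriv (legendreP (n + 1)) y) -
        ((n : ℝ) + 1) * deriv (legendreP n) y := by
  have h (k : ℕ) : HasDerivAt (legendreP k) (deriv (legendreP k) y) y :=
    (differentiable_legendreP k y).hasDerivAt
  have hright := (((hasDerivAt_id' y).const_mul (2 * (n : ℝ) + 3)).mul (h (n + 1))).sub
    ((h n).const_mul ((n : ℝ) + 1))
  have hleft := ((h (n + 2)).const_mul ((n : ℝ) + 2)).congr_of_eventuallyEq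
    (Eventually.of_forall fun y ↦ (add_two_mul_legendreP_add_two n y).symm)
  linear_combination hleft.unique hright

lemma one_sub_sq_mul_deriv_legendreP (y : ℝ) : ∀ n : ℕ,
    (1 - y ^ 2) * deriv (legendreP n) y =
      ((n : ℝ) + 1) * (y * legendreP n y - legendreP (n + 1) y)
  | 0 => by simp [funext legendreP_zero, legendreP_one]
  | 1 => by
    have bonnet := add_two_mul_legendreP_add_two 0 y
    simp only [legendreP_zero, legendreP_one, funext legendreP_one, deriv_id'', zero_add,
      Nat.cast_zero, Nat.cast_one] at bonnet ⊢
    linear_combination bonnet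
  | n + 2 => by
    have h₀ := one_sub_sq_mul_deriv_legendreP y n
    have h₁ := one_sub_sq_mul_deriv_legendreP y (n + 1)
    have hderiv := add_two_mul_deriv_legendreP_add_two n y
    have bonnet₀ := add_two_mul_legendreP_add_two n y
    have bonnet₁ := add_two_mul_legendreP_add_two (n + 1) y
    refine mul_left_cancel₀ (show (n : ℝ) + 2 ≠ 0 by positivity) ?_
    push_cast at h₁ bonnet₁ ⊢
    linear_combination (1 - y ^ 2) * hderiv + (2 * (n : ℝ) + 3) * y * h₁ - ((n : ℝ) + 1) * h₀ +
      ((n : ℝ) + 2) * bonnet₁ - ((n : ℝ) + 1) * y * bonnet₀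

lemma one_sub_sq_mul_deriv_legendreP_succ (n : ℕ) (y : ℝ) :
    (2 * (n : ℝ) + 3) * ((1 - y ^ 2) * deriv (legendreP (n + 1)) y) =
      ((n : ℝ) + 1) * ((n : ℝ) + 2) * (legendreP n y - legendreP (n + 2) y) := by
  have h := one_sub_sq_mul_deriv_legendreP y (n + 1)
  have bonnet := add_two_mul_legendreP_add_two n y
  push_cast at h
  linear_combination (2 * (n : ℝ) + 3) * h - ((n : ℝ) + 2) * bonnet

section LaplaceIntegral

/-- The base `t + i √(1 - t²) cos φ` of Laplace's integral for the Legendre polynomials. It is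
meaningful for `t ∈ [-1, 1]`; outside, the real square root is `0`. -/
noncomputable def laplaceBase (t φ : ℝ) : ℂ :=
  t + √(1 - t ^ 2) * Real.cos φ * Complex.I

lemma continuous_laplaceBase (t : ℝ) : Continuous (laplaceBase t) := by
  unfold laplaceBase
  fun_prop

variable {t : ℝ}

lemma normSq_laplaceBase (ht : t ∈ Icc (-1) 1) (φ : ℝ) :
    Complex.normSq (laplaceBase t φ) = 1 - (1 - t ^ 2) * Real.sin φ ^ 2 := by
  have hs : √(1 - t ^ 2) ^ 2 = 1 - t ^ 2 := Real.sq_sqrt (by nlinarith [ht.1, ht.2])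
  rw [laplaceBase, ← Complex.ofReal_mul, Complex.normSq_add_mul_I]
  linear_combination Real.cos φ ^ 2 * hs + (1 - t ^ 2) * Real.sin_sq_add_cos_sq φ

lemma norm_laplaceBase_le_one (ht : t ∈ Icc (-1) 1) (φ : ℝ) : ‖laplaceBase t φ‖ ≤ 1 := by
  have hdefect : 0 ≤ (1 - t ^ 2) * Real.sin φ ^ 2 :=
    mul_nonneg (by nlinarith [ht.1, ht.2]) (sq_nonneg _)
  rw [← sq_le_one_iff₀ (norm_nonneg _), ← Complex.normSq_eq_norm_sq, normSq_laplaceBase ht]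
  linarith

lemma norm_laplaceBase_lt_one (ht : t ∈ Ioo (-1) 1) {φ : ℝ} (hφ : Real.sin φ ≠ 0) :
    ‖laplaceBase t φ‖ < 1 := by
  have hdefect : 0 < (1 - t ^ 2) * Real.sin φ ^ 2 :=
    mul_pos (by nlinarith [ht.1, ht.2]) (by positivity)
  rw [← sq_lt_one_iff₀ (norm_nonneg _), ← Complex.normSq_eq_norm_sq,
    normSq_laplaceBase (Ioo_subset_Icc_self ht)]
  linarith

lemma norm_one_add_laplaceBase_le (ht : t ∈ Icc (-1) 1) (φ : ℝ) :
    ‖1 + laplaceBase t φ‖ ≤ √(2 * (1 + t)) := by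
  have hre : (laplaceBase t φ).re = t := by simp [laplaceBase]
  have hsq : ‖1 + laplaceBase t φ‖ ^ 2 = 1 + ‖laplaceBase t φ‖ ^ 2 + 2 * t := by
    simp [← Complex.normSq_eq_norm_sq, Complex.normSq_add, hre]
  have hle : ‖laplaceBase t φ‖ ^ 2 ≤ 1 :=
    pow_le_one₀ (norm_nonneg _) (norm_laplaceBase_le_one ht φ)
  exact Real.le_sqrt_of_sq_le (by linarith)

-- The primitive vanishes at `0` and `π`, so that Laplace's integrals satisfy Bonnet's recurrence.
lemma hasDerivAt_laplaceBase_pow_mul_sin (ht : t ∈ Icc (-1) 1) (n : ℕ) (φ : ℝ) :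
    HasDerivAt
      (fun φ : ℝ ↦ √(1 - t ^ 2) * Complex.I * (laplaceBase t φ ^ (n + 1) * Real.sin φ))
      (((n : ℂ) + 2) * laplaceBase t φ ^ (n + 2) -
        (2 * (n : ℂ) + 3) * t * laplaceBase t φ ^ (n + 1) +
        ((n : ℂ) + 1) * laplaceBase t φ ^ n) φ := by
  have hbase : HasDerivAt (laplaceBase t) (√(1 - t ^ 2) * (-Real.sin φ : ℝ) * Complex.I) φ :=
    (((Real.hasDerivAt_cos φ).ofReal_comp.const_mul _).mul_const _).const_add _
  refine (((hbase.pow (n + 1)).mul (Real.hasDerivAt_sin φ).ofReal_comp).const_mul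
    _).congr_deriv ?_
  have hs : (√(1 - t ^ 2) : ℂ) ^ 2 = 1 - t ^ 2 := by
    exact_mod_cast Real.sq_sqrt (show 0 ≤ 1 - t ^ 2 by nlinarith [ht.1, ht.2])
  have hcos : √(1 - t ^ 2) * Complex.I * Real.cos φ = laplaceBase t φ - t := by
    rw [laplaceBase]; ring
  have hsin : (√(1 - t ^ 2) : ℂ) ^ 2 * (Real.sin φ : ℂ) ^ 2 =
      1 - 2 * t * laplaceBase t φ + laplaceBase t φ ^ 2 := by
    have hpyth : (Real.sin φ : ℂ) ^ 2 + (Real.cos φ : ℂ) ^ 2 = 1 := by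
      exact_mod_cast Real.sin_sq_add_cos_sq φ
    rw [laplaceBase]
    linear_combination (√(1 - t ^ 2) : ℂ) ^ 2 * hpyth + hs -
      (√(1 - t ^ 2) : ℂ) ^ 2 * (Real.cos φ : ℂ) ^ 2 * Complex.I_sq
  push_cast [Pi.pow_apply] at hcos hsin ⊢
  linear_combination laplaceBase t φ ^ (n + 1) * hcos +
    ((n : ℂ) + 1) * laplaceBase t φ ^ n * hsin -
    ((n : ℂ) + 1) * laplaceBase t φ ^ n * (√(1 - t ^ 2) : ℂ) ^ 2 *
      Complex.sin φ ^ 2 * Complex.I_sq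

lemma intervalIntegrable_laplaceBase_pow (t : ℝ) (n : ℕ) (a b : ℝ) :
    IntervalIntegrable (fun φ ↦ laplaceBase t φ ^ n) volume a b :=
  ((continuous_laplaceBase t).pow n).intervalIntegrable a b

lemma integral_laplaceBase_pow_add_two (ht : t ∈ Icc (-1) 1) (n : ℕ) :
    ((n : ℂ) + 2) * ∫ φ in 0..π, laplaceBase t φ ^ (n + 2) =
      (2 * (n : ℂ) + 3) * t * (∫ φ in 0..π, laplaceBase t φ ^ (n + 1)) -
        ((n : ℂ) + 1) * ∫ φ in 0..π, laplaceBase t φ ^ n := by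
  have hint (c : ℂ) (k : ℕ) :
      IntervalIntegrable (fun φ ↦ c * laplaceBase t φ ^ k) volume 0 π :=
    (intervalIntegrable_laplaceBase_pow t k 0 π).const_mul c
  have hzero := intervalIntegral.integral_eq_sub_of_hasDerivAt
    (fun φ _ ↦ hasDerivAt_laplaceBase_pow_mul_sin ht n φ)
    (((hint _ _).sub (hint _ _)).add (hint _ _))
  rw [intervalIntegral.integral_add ((hint _ _).sub (hint _ _)) (hint _ _),
    intervalIntegral.integral_sub (hint _ _) (hint _ _)] at hzero
  simp only [intervalIntegral.integral_const_mul, Real.sin_pi, Real.sin_zero,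
    Complex.ofReal_zero, mul_zero, sub_zero] at hzero
  linear_combination hzero

lemma integral_laplaceBase_pow (ht : t ∈ Icc (-1) 1) : ∀ n : ℕ,
    ∫ φ in 0..π, laplaceBase t φ ^ n = π * legendreP n t
  | 0 => by simp [legendreP_zero]
  | 1 => by
    have hcos : IntervalIntegrable (fun φ ↦ √(1 - t ^ 2) * (Real.cos φ : ℂ) * Complex.I)
        volume 0 π :=
      Continuous.intervalIntegrable (by fun_prop) 0 π
    simp only [pow_one, laplaceBase, legendreP_one]
    rw [intervalIntegral.integral_add intervalIntegrable_const hcos,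
      intervalIntegral.integral_mul_const, intervalIntegral.integral_const_mul,
      intervalIntegral.integral_ofReal (f := Real.cos), integral_cos]
    simp
  | n + 2 => by
    have bonnet : ((n : ℂ) + 2) * legendreP (n + 2) t =
        (2 * (n : ℂ) + 3) * t * legendreP (n + 1) t - ((n : ℂ) + 1) * legendreP n t := by
      exact_mod_cast add_two_mul_legendreP_add_two n t
    have hrec := integral_laplaceBase_pow_add_two ht n
    rw [integral_laplaceBase_pow ht n, integral_laplaceBase_pow ht (n + 1)] at hrec
    refine mul_left_cancel₀ (show (n : ℂ) + 2 ≠ 0 by exact_mod_cast (n + 1).succ_ne_zero) ?_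
    linear_combination hrec - π * bonnet

lemma integral_laplaceBase_pow_mul_one_add (ht : t ∈ Icc (-1) 1) (n : ℕ) :
    ∫ φ in 0..π, laplaceBase t φ ^ n * (1 + laplaceBase t φ) =
      ((π * (legendreP n t + legendreP (n + 1) t) : ℝ) : ℂ) := by
  simp only [mul_add, mul_one, ← pow_succ]
  rw [intervalIntegral.integral_add (intervalIntegrable_laplaceBase_pow t n 0 π)
    (intervalIntegrable_laplaceBase_pow t (n + 1) 0 π), integral_laplaceBase_pow ht,
    integral_laplaceBase_pow ht]
  push_cast
  ring

lemma norm_laplaceBase_pow_mul_one_add_le (ht : t ∈ Icc (-1) 1) (n : ℕ) (φ : ℝ) :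
    ‖laplaceBase t φ ^ n * (1 + laplaceBase t φ)‖ ≤ √(2 * (1 + t)) := by
  rw [norm_mul, norm_pow]
  exact (mul_le_of_le_one_left (norm_nonneg _)
    (pow_le_one₀ (norm_nonneg _) (norm_laplaceBase_le_one ht φ))).trans
    (norm_one_add_laplaceBase_le ht φ)

lemma abs_legendreP_add_succ_le (ht : t ∈ Icc (-1) 1) (n : ℕ) :
    |legendreP n t + legendreP (n + 1) t| ≤ √(2 * (1 + t)) := by
  have hint : ‖∫ φ in 0..π, laplaceBase t φ ^ n * (1 + laplaceBase t φ)‖ ≤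
      √(2 * (1 + t)) * |π - 0| :=
    intervalIntegral.norm_integral_le_of_norm_le_const
      fun φ _ ↦ norm_laplaceBase_pow_mul_one_add_le ht n φ
  rw [integral_laplaceBase_pow_mul_one_add ht, Complex.norm_real, Real.norm_eq_abs, abs_mul,
    sub_zero, mul_comm] at hint
  exact le_of_mul_le_mul_right hint (abs_pos.2 Real.pi_ne_zero)

lemma tendsto_legendreP_add_succ (ht : t ∈ Ioo (-1) 1) :
    Tendsto (fun n ↦ legendreP n t + legendreP (n + 1) t) atTop (𝓝 0) := by
  have ht' := Ioo_subset_Icc_self ht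
  have hpow : ∀ᵐ φ, φ ∈ uIoc 0 π →
      Tendsto (fun n ↦ laplaceBase t φ ^ n * (1 + laplaceBase t φ)) atTop (𝓝 0) := by
    filter_upwards [Measure.ae_ne volume π] with φ hφπ hφ
    rw [uIoc_of_le Real.pi_pos.le] at hφ
    have hsin : Real.sin φ ≠ 0 :=
      (Real.sin_pos_of_pos_of_lt_pi hφ.1 (hφ.2.lt_of_ne hφπ)).ne'
    simpa using (tendsto_pow_atTop_nhds_zero_of_norm_lt_one
      (norm_laplaceBase_lt_one ht hsin)).mul_const (1 + laplaceBase t φ)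
  have hint : Tendsto (fun n ↦ ∫ φ in 0..π, laplaceBase t φ ^ n * (1 + laplaceBase t φ))
      atTop (𝓝 (∫ _ in 0..π, 0)) := by
    refine intervalIntegral.tendsto_integral_filter_of_dominated_convergence
      (fun _ ↦ √(2 * (1 + t))) (.of_forall fun n ↦ ?_) (.of_forall fun n ↦ .of_forall fun φ _ ↦
        norm_laplaceBase_pow_mul_one_add_le ht' n φ) intervalIntegrable_const hpow
    have := continuous_laplaceBase t
    exact Continuous.aestronglyMeasurable (by fun_prop)
  simp only [integral_laplaceBase_pow_mul_one_add ht', intervalIntegral.integral_zero] at hint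
  simpa [Real.pi_ne_zero] using (Complex.continuous_re.tendsto _).comp hint |>.const_mul π⁻¹

end LaplaceIntegral

section PartialSums

/-- The `N`-th partial sum of the series `∑ (2l + 1) Pₗ(y) / (l (l + 1))`, `l ≥ 1`, whose sum is
`-4π` times the Green's function of the Poisson equation on the sphere. -/
noncomputable def greenPartialSum (N : ℕ) (y : ℝ) : ℝ :=
  ∑ l ∈ Finset.Icc 1 N, (2 * (l : ℝ) + 1) * legendreP l y / ((l : ℝ) * ((l : ℝ) + 1))

lemma greenPartialSum_zero (y : ℝ) : greenPartialSum 0 y = 0 := by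
  simp [greenPartialSum]

lemma greenPartialSum_succ (N : ℕ) (y : ℝ) :
    greenPartialSum (N + 1) y = greenPartialSum N y +
      (2 * (N : ℝ) + 3) / (((N : ℝ) + 1) * ((N : ℝ) + 2)) * legendreP (N + 1) y := by
  rw [greenPartialSum, Finset.sum_Icc_succ_top (by omega), ← greenPartialSum]
  push_cast
  ring

lemma contDiff_greenPartialSum {k : WithTop ℕ∞} (N : ℕ) : ContDiff ℝ k (greenPartialSum N) :=
  ContDiff.sum fun l _ ↦ (contDiff_const.mul (contDiff_legendreP l)).div_const _

lemma differentiable_greenPartialSum (N : ℕ) : Differentiable ℝ (greenPartialSum N) :=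
  (contDiff_greenPartialSum (k := 1) N).differentiable one_ne_zero

lemma one_sub_sq_mul_deriv_greenPartialSum (N : ℕ) (y : ℝ) :
    (1 - y ^ 2) * deriv (greenPartialSum N) y =
      1 + y - (legendreP N y + legendreP (N + 1) y) := by
  induction N with
  | zero => simp [funext greenPartialSum_zero, legendreP_zero, legendreP_one]
  | succ N ih =>
    have hderiv : deriv (greenPartialSum (N + 1)) y = deriv (greenPartialSum N) y +
        (2 * (N : ℝ) + 3) / (((N : ℝ) + 1) * ((N : ℝ) + 2)) * deriv (legendreP (N + 1)) y := by
      rw [funext (greenPartialSum_succ N), deriv_fun_add (differentiable_greenPartialSum N y)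
        ((differentiable_legendreP (N + 1) y).const_mul _), deriv_const_mul_field]
    have hterm : (2 * (N : ℝ) + 3) / (((N : ℝ) + 1) * ((N : ℝ) + 2)) *
        ((1 - y ^ 2) * deriv (legendreP (N + 1)) y) = legendreP N y - legendreP (N + 2) y := by
      rw [div_mul_eq_mul_div, one_sub_sq_mul_deriv_legendreP_succ,
        mul_div_cancel_left₀ _ (by positivity)]
    linear_combination (1 - y ^ 2) * hderiv + ih + hterm

lemma greenPartialSum_neg_one (N : ℕ) :
    greenPartialSum N (-1) = -1 + (-1) ^ N / ((N : ℝ) + 1) := by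
  induction N with
  | zero => simp [greenPartialSum_zero]
  | succ N ih =>
    rw [greenPartialSum_succ, ih, legendreP_neg_one]
    push_cast
    field_simp
    ring

lemma tendsto_greenPartialSum_neg_one :
    Tendsto (fun N ↦ greenPartialSum N (-1)) atTop (𝓝 (-1)) := by
  have hosc : Tendsto (fun N : ℕ ↦ (-1 : ℝ) ^ N / ((N : ℝ) + 1)) atTop (𝓝 0) := by
    refine squeeze_zero_norm (fun N ↦ le_of_eq ?_) tendsto_one_div_add_atTop_nhds_zero_nat
    rw [norm_div, norm_pow, norm_neg, norm_one, one_pow, Real.norm_of_nonneg (by positivity)]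
  simpa [greenPartialSum_neg_one] using hosc.const_add (-1)

variable {t : ℝ}

lemma deriv_greenPartialSum (ht : t ∈ Ioo (-1) 1) (N : ℕ) :
    deriv (greenPartialSum N) t =
      (1 + t - (legendreP N t + legendreP (N + 1) t)) / ((1 - t) * (1 + t)) := by
  have hpos : 0 < (1 - t) * (1 + t) := mul_pos (by linarith [ht.2]) (by linarith [ht.1])
  rw [eq_div_iff hpos.ne', ← one_sub_sq_mul_deriv_greenPartialSum]
  ring

lemma abs_deriv_greenPartialSum_le (ht : t ∈ Ioo (-1) 1) (N : ℕ) :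
    |deriv (greenPartialSum N) t| ≤ 2 * √2 / (1 - t) * (√(1 + t))⁻¹ := by
  have h₀ : 0 < 1 - t := by linarith [ht.2]
  have h₁ : 0 < 1 + t := by linarith [ht.1]
  have hbound := abs_legendreP_add_succ_le (Ioo_subset_Icc_self ht)
  have hinit : |1 + t| ≤ √(2 * (1 + t)) := by
    simpa only [legendreP_zero, zero_add, legendreP_one] using hbound 0
  rw [deriv_greenPartialSum ht, abs_div, abs_of_pos (mul_pos h₀ h₁)]
  calc |1 + t - (legendreP N t + legendreP (N + 1) t)| / ((1 - t) * (1 + t))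
      ≤ 2 * √(2 * (1 + t)) / ((1 - t) * (1 + t)) := by
        gcongr
        linarith [abs_sub (1 + t) (legendreP N t + legendreP (N + 1) t), hinit, hbound N]
    _ = 2 * √2 / (1 - t) * (√(1 + t) / (1 + t)) := by
        rw [Real.sqrt_mul zero_le_two]
        field_simp
    _ = 2 * √2 / (1 - t) * (√(1 + t))⁻¹ := by rw [Real.sqrt_div_self]

lemma tendsto_deriv_greenPartialSum (ht : t ∈ Ioo (-1) 1) :
    Tendsto (fun N ↦ deriv (greenPartialSum N) t) atTop (𝓝 (1 - t)⁻¹) := by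
  have h₁ : 1 + t ≠ 0 := by linarith [ht.1]
  simp only [deriv_greenPartialSum ht]
  convert ((tendsto_legendreP_add_succ ht).const_sub (1 + t)).div_const ((1 - t) * (1 + t))
    using 2
  rw [sub_zero, div_mul_cancel_right₀ h₁]

end PartialSums

section Integration

variable {y : ℝ}

lemma intervalIntegrable_inv_sqrt (a b : ℝ) :
    IntervalIntegrable (fun x ↦ (√x)⁻¹) volume a b := by
  have hrpow (x : ℝ) : x ^ (-(1 / 2) : ℝ) = (√x)⁻¹ := by
    rw [Real.rpow_neg_eq_inv_rpow, ← Real.sqrt_eq_rpow, Real.sqrt_inv]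
  simpa only [hrpow] using
    intervalIntegral.intervalIntegrable_rpow' (a := a) (b := b) (r := -(1 / 2)) (by norm_num)

lemma intervalIntegrable_inv_sqrt_one_add (a b : ℝ) :
    IntervalIntegrable (fun t ↦ (√(1 + t))⁻¹) volume a b := by
  simpa only [add_sub_cancel_left] using
    (intervalIntegrable_inv_sqrt (1 + a) (1 + b)).comp_add_left 1

lemma integral_inv_one_sub (hy : y < 1) :
    ∫ t in (-1)..y, (1 - t)⁻¹ = -Real.log ((1 - y) / 2) := by
  rw [intervalIntegral.integral_comp_sub_left (fun t ↦ t⁻¹), integral_inv_of_pos (by linarith)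
    (by norm_num), ← Real.log_inv, inv_div]
  norm_num

lemma tendsto_integral_deriv_greenPartialSum (hy₁ : -1 ≤ y) (hy₂ : y < 1) :
    Tendsto (fun N ↦ ∫ t in (-1)..y, deriv (greenPartialSum N) t) atTop
      (𝓝 (∫ t in (-1)..y, (1 - t)⁻¹)) := by
  have hmem {t : ℝ} (ht : t ∈ uIoc (-1) y) : t ∈ Ioo (-1) 1 ∧ t ≤ y := by
    rw [uIoc_of_le hy₁] at ht
    exact ⟨⟨ht.1, ht.2.trans_lt hy₂⟩, ht.2⟩
  refine intervalIntegral.tendsto_integral_filter_of_dominated_convergence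
    (fun t ↦ 2 * √2 / (1 - y) * (√(1 + t))⁻¹)
    (.of_forall fun N ↦ (measurable_deriv _).aestronglyMeasurable)
    (.of_forall fun N ↦ .of_forall fun t ht ↦ ?_)
    ((intervalIntegrable_inv_sqrt_one_add (-1) y).const_mul _)
    (.of_forall fun t ht ↦ tendsto_deriv_greenPartialSum (hmem ht).1)
  have : 0 < 1 - y := sub_pos.2 hy₂
  refine (abs_deriv_greenPartialSum_le (hmem ht).1 N).trans ?_
  gcongr
  exact (hmem ht).2

lemma greenPartialSum_eq_add_integral_deriv (N : ℕ) (a b : ℝ) :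
    greenPartialSum N b = greenPartialSum N a + ∫ t in a..b, deriv (greenPartialSum N) t := by
  rw [intervalIntegral.integral_deriv_eq_sub (fun t _ ↦ differentiable_greenPartialSum N t)
    (((contDiff_greenPartialSum N).continuous_deriv le_rfl).intervalIntegrable a b)]
  ring

lemma tendsto_greenPartialSum (hy₁ : -1 ≤ y) (hy₂ : y < 1) :
    Tendsto (fun N ↦ greenPartialSum N y) atTop (𝓝 (-1 - Real.log ((1 - y) / 2))) := by
  simp only [greenPartialSum_eq_add_integral_deriv _ (-1) y]
  rw [sub_eq_add_neg, ← integral_inv_one_sub hy₂]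
  exact tendsto_greenPartialSum_neg_one.add (tendsto_integral_deriv_greenPartialSum hy₁ hy₂)

end Integration

lemma neg_log_exp_one_div_two_mul {x : ℝ} (hx : x ≠ 0) :
    -Real.log (Real.exp 1 / 2 * x) = -1 - Real.log (x / 2) := by
  rw [div_mul_eq_mul_div, mul_div_assoc, Real.log_mul (Real.exp_ne_zero 1)
    (div_ne_zero hx two_ne_zero), Real.log_exp]
  ring

/-- For `-1 ≤ y < 1`, the series `∑_{l=1}^∞ (2l+1) P l y / (l(l+1))` converges and equals
`-log((e/2)(1-y)) = -1 - log((1-y)/2)`. -/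
theorem poisson_green_series (y : ℝ) (hy₁ : -1 ≤ y) (hy₂ : y < 1) :
    Tendsto (fun N : ℕ => ∑ l ∈ Finset.Icc 1 N,
        (2 * (l : ℝ) + 1) * legendreP l y / ((l : ℝ) * ((l : ℝ) + 1))) atTop
      (𝓝 (-Real.log (Real.exp 1 / 2 * (1 - y)))) ∧
    -Real.log (Real.exp 1 / 2 * (1 - y)) = -1 - Real.log ((1 - y) / 2) := by
  have hlog := neg_log_exp_one_div_two_mul (sub_pos.2 hy₂).ne'
  refine ⟨?_, hlog⟩
  rw [hlog]
  exact tendsto_greenPartialSum hy₁ hy₂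
end
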